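/- Let k be a field and A = k[x,y]/(xy), and let M = (x,y) ⊆ A be the ideal generated by x and y, viewed as an A-module. Then every A-module automorphism of M is of the form x ↦ λx, y ↦ μy for uniquely determined λ, μ ∈ k^×; in particular the automorphism group of the A-module M is isomorphic to k^× × k^×. -/

import Mathlib

noncomputable section
open MvPolynomial

/-- The algebra `k[x,y]/(xy)`. -/
abbrev Axy (k : Type) [Field k] : Type :=
  MvPolynomial (Fin 2) k ⧸ Ideal.span {(X 0 : MvPolynomial (Fin 2) k) * X 1}

/-- The class of `x` in `k[x,y]/(xy)`. -/
def xbar (k : Type) [Field k] : Axy k := Ideal.Quotient.mk _ (X 0)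

/-- The class of `y` in `k[x,y]/(xy)`. -/
def ybar (k : Type) [Field k] : Axy k := Ideal.Quotient.mk _ (X 1)

/-- The ideal `M = (x, y) ⊆ k[x,y]/(xy)`, viewed as a module over `k[x,y]/(xy)`. -/
abbrev Mxy (k : Type) [Field k] : Ideal (Axy k) := Ideal.span {xbar k, ybar k}

/-- `x` as an element of the module `M = (x,y)`. -/
def xel (k : Type) [Field k] : Mxy k :=
  ⟨xbar k, Ideal.subset_span (Set.mem_insert _ _)⟩

/-- `y` as an element of the module `M = (x,y)`. -/
def yel (k : Type) [Field k] : Mxy k :=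
  ⟨ybar k, Ideal.subset_span (Set.mem_insert_of_mem _ rfl)⟩

/-- The projection `A → k[t]`, `x ↦ t`, `y ↦ 0`. -/
def px (k : Type) [Field k] : Axy k →ₐ[k] Polynomial k :=
  Ideal.Quotient.liftₐ _ (aeval ![Polynomial.X, 0]) (by
    intro a ha
    obtain ⟨b, rfl⟩ := Ideal.mem_span_singleton'.1 ha
    simp)

/-- The projection `A → k[t]`, `x ↦ 0`, `y ↦ t`. -/
def py (k : Type) [Field k] : Axy k →ₐ[k] Polynomial k :=
  Ideal.Quotient.liftₐ _ (aeval ![0, Polynomial.X]) (by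
    intro a ha
    obtain ⟨b, rfl⟩ := Ideal.mem_span_singleton'.1 ha
    simp)

section helpers
variable (k : Type) [Field k]

lemma smul_A (l : k) (a : Axy k) : l • a = algebraMap k (Axy k) l * a :=
  Algebra.smul_def l a

lemma px_mk (p : MvPolynomial (Fin 2) k) :
    px k (Ideal.Quotient.mk _ p) = aeval ![Polynomial.X, 0] p := rfl

lemma py_mk (p : MvPolynomial (Fin 2) k) :
    py k (Ideal.Quotient.mk _ p) = aeval ![0, Polynomial.X] p := rfl

lemma px_x : px k (xbar k) = Polynomial.X := by simp [xbar, px_mk]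
lemma px_y : px k (ybar k) = 0 := by simp [ybar, px_mk]
lemma py_x : py k (xbar k) = 0 := by simp [xbar, py_mk]
lemma py_y : py k (ybar k) = Polynomial.X := by simp [ybar, py_mk]

lemma xy_zero : xbar k * ybar k = 0 := by
  rw [xbar, ybar, ← map_mul]
  exact Ideal.Quotient.eq_zero_iff_mem.2 (Ideal.subset_span rfl)

lemma mul_x (a : Axy k) : a * xbar k = Polynomial.aeval (xbar k) (px k a) * xbar k := by
  obtain ⟨p, rfl⟩ := Ideal.Quotient.mk_surjective a
  induction p using MvPolynomial.induction_on with
  | C c =>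
    rw [px_mk]
    simp only [algHom_C, Polynomial.algebraMap_eq, Polynomial.aeval_C]
    rfl
  | add p q hp hq => rw [map_add, add_mul, hp, hq, map_add, map_add, add_mul]
  | mul_X p i hp =>
    rw [map_mul, map_mul, map_mul, mul_right_comm, hp]
    fin_cases i
    · change _ * xbar k = _ * Polynomial.aeval (xbar k) (px k (xbar k)) * _
      rw [px_x, Polynomial.aeval_X]
    · change _ * ybar k = _ * Polynomial.aeval (xbar k) (px k (ybar k)) * _
      rw [px_y, map_zero, mul_assoc, xy_zero]; simp

lemma mul_y (a : Axy k) : a * ybar k = Polynomial.aeval (ybar k) (py k a) * ybar k := by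
  obtain ⟨p, rfl⟩ := Ideal.Quotient.mk_surjective a
  induction p using MvPolynomial.induction_on with
  | C c =>
    rw [py_mk]
    simp only [algHom_C, Polynomial.algebraMap_eq, Polynomial.aeval_C]
    rfl
  | add p q hp hq => rw [map_add, add_mul, hp, hq, map_add, map_add, add_mul]
  | mul_X p i hp =>
    rw [map_mul, map_mul, map_mul, mul_right_comm, hp]
    fin_cases i
    · change _ * xbar k = _ * Polynomial.aeval (ybar k) (py k (xbar k)) * _
      rw [py_x, map_zero, mul_assoc, mul_comm (ybar k), xy_zero]; simp
    · change _ * ybar k = _ * Polynomial.aeval (ybar k) (py k (ybar k)) * _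
      rw [py_y, Polynomial.aeval_X]

lemma px_aeval (f : Polynomial k) : px k (Polynomial.aeval (xbar k) f) = f := by
  rw [← Polynomial.aeval_algHom_apply, px_x, Polynomial.aeval_X_left_apply]

lemma py_aeval (f : Polynomial k) : py k (Polynomial.aeval (ybar k) f) = f := by
  rw [← Polynomial.aeval_algHom_apply, py_y, Polynomial.aeval_X_left_apply]

lemma mem_form {m : Axy k} (hm : m ∈ Mxy k) : ∃ f g : Polynomial k,
    m = Polynomial.aeval (xbar k) f * xbar k + Polynomial.aeval (ybar k) g * ybar k := by
  obtain ⟨a, b, rfl⟩ := Ideal.mem_span_pair.1 hm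
  exact ⟨px k a, py k b, by rw [← mul_x, ← mul_y]⟩

lemma eq_of_proj {m n : Axy k} (hm : m ∈ Mxy k) (hn : n ∈ Mxy k)
    (h1 : px k m = px k n) (h2 : py k m = py k n) : m = n := by
  rw [← sub_eq_zero] at h1 h2 ⊢
  rw [← map_sub] at h1 h2
  obtain ⟨f, g, h⟩ := mem_form k (sub_mem hm hn)
  rw [h] at h1 h2 ⊢
  simp only [map_add, map_mul, px_aeval, px_x, px_y, mul_zero, add_zero] at h1
  simp only [map_add, map_mul, py_aeval, py_x, py_y, mul_zero, zero_add] at h2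
  have hf : f = 0 := by simpa using h1
  have hg : g = 0 := by simpa using h2
  simp [hf, hg]

lemma hom_ext {F G : Mxy k →ₗ[Axy k] Mxy k} (hx : F (xel k) = G (xel k))
    (hy : F (yel k) = G (yel k)) : F = G := by
  ext1 ⟨m, hm⟩
  obtain ⟨a, b, rfl⟩ := Ideal.mem_span_pair.1 hm
  have : (⟨a * xbar k + b * ybar k, hm⟩ : Mxy k) = a • xel k + b • yel k := rfl
  rw [this, map_add, map_add, map_smul, map_smul, map_smul, map_smul, hx, hy]

lemma end_x (F : Mxy k →ₗ[Axy k] Mxy k) : ∃ f : Polynomial k,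
    F (xel k) = Polynomial.aeval (xbar k) f • xel k := by
  obtain ⟨f, g, h⟩ := mem_form k (F (xel k)).2
  have h0 : ybar k • F (xel k) = 0 := by
    rw [← map_smul]
    have : ybar k • xel k = 0 := Subtype.ext (by
      change ybar k * xbar k = 0
      rw [mul_comm, xy_zero])
    rw [this, map_zero]
  have h1 : ybar k * (F (xel k) : Axy k) = 0 := congrArg Subtype.val h0
  have h2 := congrArg (py k) h1
  rw [h] at h2
  simp only [map_add, map_mul, py_aeval, py_x, py_y, mul_zero, zero_add, map_zero] at h2
  have hg : g = 0 := by simpa using h2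
  refine ⟨f, Subtype.ext ?_⟩
  rw [h, hg]
  change _ = _ * xbar k
  simp

lemma end_y (F : Mxy k →ₗ[Axy k] Mxy k) : ∃ f : Polynomial k,
    F (yel k) = Polynomial.aeval (ybar k) f • yel k := by
  obtain ⟨f, g, h⟩ := mem_form k (F (yel k)).2
  have h0 : xbar k • F (yel k) = 0 := by
    rw [← map_smul]
    have : xbar k • yel k = 0 := Subtype.ext (xy_zero k)
    rw [this, map_zero]
  have h1 : xbar k * (F (yel k) : Axy k) = 0 := congrArg Subtype.val h0
  have h2 := congrArg (px k) h1
  rw [h] at h2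
  simp only [map_add, map_mul, px_aeval, px_x, px_y, mul_zero, add_zero, map_zero] at h2
  have hf : f = 0 := by simpa using h2
  refine ⟨g, Subtype.ext ?_⟩
  rw [h, hf]
  change _ = _ * ybar k
  simp

lemma unit_C {f g : Polynomial k} (h : f * g = 1) : ∃ c : kˣ, f = Polynomial.C (c : k) := by
  obtain ⟨r, hr, h'⟩ := Polynomial.isUnit_iff.1 (IsUnit.of_mul_eq_one g h)
  exact ⟨hr.unit, by rw [← h']; rfl⟩

lemma aut_x (F : Mxy k ≃ₗ[Axy k] Mxy k) : ∃ c : kˣ, (F (xel k) : Axy k) = (c : k) • xbar k := by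
  obtain ⟨f, hf⟩ := end_x k F.toLinearMap
  obtain ⟨g, hg⟩ := end_x k F.symm.toLinearMap
  simp only [LinearEquiv.coe_coe] at hf hg
  have h := F.symm_apply_apply (xel k)
  rw [hf, map_smul, hg] at h
  have h1 : Polynomial.aeval (xbar k) f * (Polynomial.aeval (xbar k) g * xbar k) = xbar k :=
    congrArg Subtype.val h
  have h2 := congrArg (px k) h1
  simp only [map_mul, px_aeval, px_x] at h2
  rw [← mul_assoc] at h2
  obtain ⟨c, rfl⟩ := unit_C k (mul_right_cancel₀ Polynomial.X_ne_zero (h2.trans (one_mul _).symm))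
  refine ⟨c, ?_⟩
  rw [hf, Polynomial.aeval_C, smul_A]
  rfl

lemma aut_y (F : Mxy k ≃ₗ[Axy k] Mxy k) : ∃ c : kˣ, (F (yel k) : Axy k) = (c : k) • ybar k := by
  obtain ⟨f, hf⟩ := end_y k F.toLinearMap
  obtain ⟨g, hg⟩ := end_y k F.symm.toLinearMap
  simp only [LinearEquiv.coe_coe] at hf hg
  have h := F.symm_apply_apply (yel k)
  rw [hf, map_smul, hg] at h
  have h1 : Polynomial.aeval (ybar k) f * (Polynomial.aeval (ybar k) g * ybar k) = ybar k :=
    congrArg Subtype.val h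
  have h2 := congrArg (py k) h1
  simp only [map_mul, py_aeval, py_y] at h2
  rw [← mul_assoc] at h2
  obtain ⟨c, rfl⟩ := unit_C k (mul_right_cancel₀ Polynomial.X_ne_zero (h2.trans (one_mul _).symm))
  refine ⟨c, ?_⟩
  rw [hf, Polynomial.aeval_C, smul_A]
  rfl

lemma smul_x_inj {c d : kˣ} (h : (c : k) • xbar k = (d : k) • xbar k) : c = d := by
  have h2 := congrArg (px k) h
  rw [map_smul, map_smul, px_x] at h2
  exact Units.ext (smul_left_injective k Polynomial.X_ne_zero h2)

lemma smul_y_inj {c d : kˣ} (h : (c : k) • ybar k = (d : k) • ybar k) : c = d := by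
  have h2 := congrArg (py k) h
  rw [map_smul, map_smul, py_y] at h2
  exact Units.ext (smul_left_injective k Polynomial.X_ne_zero h2)

lemma x_mem : xbar k ∈ Mxy k := (xel k).2
lemma y_mem : ybar k ∈ Mxy k := (yel k).2

lemma Ex_mem (l m : k) {a : Axy k} (ha : a ∈ Mxy k) :
    l • Polynomial.aeval (xbar k) (px k a) + m • Polynomial.aeval (ybar k) (py k a) ∈ Mxy k := by
  obtain ⟨f, g, rfl⟩ := mem_form k ha
  simp only [map_add, map_mul, px_aeval, px_x, px_y, py_aeval, py_x, py_y, mul_zero, add_zero,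
    zero_add, Polynomial.aeval_X, smul_A]
  exact add_mem (Ideal.mul_mem_left _ _ (Ideal.mul_mem_left _ _ (x_mem k)))
    (Ideal.mul_mem_left _ _ (Ideal.mul_mem_left _ _ (y_mem k)))

/-- The endomorphism `x ↦ l x`, `y ↦ m y`. -/
def Elm (l m : k) : Mxy k →ₗ[Axy k] Mxy k where
  toFun a := ⟨_, Ex_mem k l m a.2⟩
  map_add' a b := Subtype.ext (by
    simp only [Submodule.coe_add, map_add, smul_add]; abel)
  map_smul' r a := by
    obtain ⟨a, ha⟩ := a
    refine Subtype.ext ?_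
    obtain ⟨f, g, rfl⟩ := mem_form k ha
    change l • Polynomial.aeval (xbar k) (px k (r * _)) +
      m • Polynomial.aeval (ybar k) (py k (r * _)) = r * (l • Polynomial.aeval (xbar k) (px k _) +
      m • Polynomial.aeval (ybar k) (py k _))
    simp only [map_add, map_mul, px_aeval, px_x, px_y, py_aeval, py_x, py_y, mul_zero, add_zero,
      zero_add, Polynomial.aeval_X, smul_A]
    linear_combination (-algebraMap k (Axy k) l * Polynomial.aeval (xbar k) f) * mul_x k r +
      (-algebraMap k (Axy k) m * Polynomial.aeval (ybar k) g) * mul_y k r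

lemma Elm_x (l m : k) : Elm k l m (xel k) = algebraMap k (Axy k) l • xel k := by
  refine Subtype.ext ?_
  change l • Polynomial.aeval (xbar k) (px k (xbar k)) +
    m • Polynomial.aeval (ybar k) (py k (xbar k)) = _ * xbar k
  simp [px_x, py_x, smul_A]

lemma Elm_y (l m : k) : Elm k l m (yel k) = algebraMap k (Axy k) m • yel k := by
  refine Subtype.ext ?_
  change l • Polynomial.aeval (xbar k) (px k (ybar k)) +
    m • Polynomial.aeval (ybar k) (py k (ybar k)) = _ * ybar k
  simp [px_y, py_y, smul_A]

lemma Elm_one : Elm k 1 1 = LinearMap.id := by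
  apply hom_ext
  · rw [Elm_x, map_one, one_smul]; rfl
  · rw [Elm_y, map_one, one_smul]; rfl

lemma Elm_mul (l m l' m' : k) : Elm k (l * l') (m * m') = Elm k l m ∘ₗ Elm k l' m' := by
  apply hom_ext
  · rw [LinearMap.comp_apply, Elm_x, Elm_x, map_smul, Elm_x, mul_comm l l', map_mul]; exact Subtype.ext (mul_assoc _ _ (xbar k))
  · rw [LinearMap.comp_apply, Elm_y, Elm_y, map_smul, Elm_y, mul_comm m m', map_mul]; exact Subtype.ext (mul_assoc _ _ (ybar k))

/-- The homomorphism `kˣ × kˣ → Aut M`. -/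
def phi : kˣ × kˣ →* (Mxy k ≃ₗ[Axy k] Mxy k) where
  toFun u := LinearEquiv.ofLinearMap (Elm k u.1 u.2) (Elm k ↑(u.1⁻¹) ↑(u.2⁻¹))
    (by rw [← Elm_mul, Units.mul_inv, Units.mul_inv, Elm_one])
    (by rw [← Elm_mul, Units.inv_mul, Units.inv_mul, Elm_one])
  map_one' := LinearEquiv.toLinearMap_injective (Elm_one k)
  map_mul' u v := LinearEquiv.toLinearMap_injective (Elm_mul k u.1 u.2 v.1 v.2)

lemma phi_x (u : kˣ × kˣ) : (phi k u (xel k) : Axy k) = (u.1 : k) • xbar k := by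
  rw [smul_A]; exact congrArg Subtype.val (Elm_x k u.1 u.2)

lemma phi_y (u : kˣ × kˣ) : (phi k u (yel k) : Axy k) = (u.2 : k) • ybar k := by
  rw [smul_A]; exact congrArg Subtype.val (Elm_y k u.1 u.2)

end helpers

/-- With `A = k[x,y]/(xy)` and `M = (x,y) ⊆ A` viewed as an `A`-module, every
`A`-module automorphism of `M` is of the form `x ↦ λx`, `y ↦ μy` for uniquely determined
`λ, μ ∈ kˣ`; in particular the `A`-module automorphism group of `M` is isomorphic to
`kˣ × kˣ`. -/
theorem stmt_4 (k : Type) [Field k] :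
    (∀ F : Mxy k ≃ₗ[Axy k] Mxy k, ∃! lm : kˣ × kˣ,
      ((F (xel k) : Axy k) = (lm.1 : k) • xbar k ∧
       (F (yel k) : Axy k) = (lm.2 : k) • ybar k)) ∧
    Nonempty ((Mxy k ≃ₗ[Axy k] Mxy k) ≃* (kˣ × kˣ)) := by
  refine ⟨fun F => ?_, ⟨(MulEquiv.ofBijective (phi k) ⟨fun u v h => ?_, fun F => ?_⟩).symm⟩⟩
  · obtain ⟨c, hc⟩ := aut_x k F
    obtain ⟨d, hd⟩ := aut_y k F
    exact ⟨(c, d), ⟨hc, hd⟩, fun u hu => Prod.ext (smul_x_inj k (hu.1.symm.trans hc))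
      (smul_y_inj k (hu.2.symm.trans hd))⟩
  · exact Prod.ext (smul_x_inj k (by rw [← phi_x, ← phi_x, h]))
      (smul_y_inj k (by rw [← phi_y, ← phi_y, h]))
  · obtain ⟨c, hc⟩ := aut_x k F
    obtain ⟨d, hd⟩ := aut_y k F
    exact ⟨(c, d), LinearEquiv.toLinearMap_injective (hom_ext k
      (Subtype.ext ((phi_x k (c, d)).trans hc.symm))
      (Subtype.ext ((phi_y k (c, d)).trans hd.symm)))⟩

end
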